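/- arXiv:2012.11640 — 8 statements merged into one kernel-verified Lean document; each statement's English description precedes it below -/
import Mathlib

section
/- Let 𝔤 be a finite-dimensional real Lie algebra equipped with an inner product, let 𝔥 be a Lie subalgebra of 𝔤, let 𝔭 be the orthogonal complement of 𝔥 in 𝔤, and let x ∈ 𝔭 be nonzero. Then dim Z_𝔭(x) is the least natural number b with the following property: every orthonormal family y₁, …, y_b of vectors in 𝔭, each orthogonal to x, contains some index i with [x,y_i] ≠ 0. -/
open Module

/-- A positive definite form has an orthonormal family of full size. -/
lemma exists_orthonormal_aux {V : Type*} [AddCommGroup V] [Module ℝ V] [Module.Finite ℝ V]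
    (B : LinearMap.BilinForm ℝ V) (hsymm : ∀ x y : V, B x y = B y x)
    (hpos : ∀ x : V, x ≠ 0 → 0 < B x x) :
    ∃ v : Fin (finrank ℝ V) → V, ∀ i j, B (v i) (v j) = if i = j then 1 else 0 := by
  obtain ⟨v, hv⟩ := LinearMap.BilinForm.exists_orthogonal_basis (B := B) ⟨hsymm⟩
  refine ⟨fun i => (Real.sqrt (B (v i) (v i)))⁻¹ • v i, fun i j => ?_⟩
  split_ifs with h
  · subst h
    have hp := hpos (v i) (v.ne_zero i)
    have h1 := Real.mul_self_sqrt hp.le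
    have h2 : Real.sqrt (B (v i) (v i)) ≠ 0 := (Real.sqrt_pos.2 hp).ne'
    simp only [map_smul, LinearMap.smul_apply, smul_eq_mul]
    generalize Real.sqrt (B (v i) (v i)) = r at *
    rw [← h1]
    field_simp
  · have h0 : B (v i) (v j) = 0 := hv h
    simp [h0]

/-- Let `𝔤` be a finite-dimensional real Lie algebra with an inner product
`B`, `𝔥` a Lie subalgebra, `𝔭` the orthogonal complement of `𝔥`, and `x ∈ 𝔭` nonzero.
Then `dim Z_𝔭(x)` is the least natural number `b` such that every orthonormal family
`y₁, …, y_b` of vectors of `𝔭`, each orthogonal to `x`, contains some `i` with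
`⁅x, y i⁆ ≠ 0`. -/
theorem statement1 {𝔤 : Type*} [LieRing 𝔤] [LieAlgebra ℝ 𝔤] [Module.Finite ℝ 𝔤]
    (B : LinearMap.BilinForm ℝ 𝔤)
    (hsymm : ∀ x y : 𝔤, B x y = B y x)
    (hposdef : ∀ x : 𝔤, x ≠ 0 → 0 < B x x)
    (𝔥 : LieSubalgebra ℝ 𝔤)
    (𝔭 : Submodule ℝ 𝔤) (h𝔭 : 𝔭 = LinearMap.BilinForm.orthogonal B 𝔥.toSubmodule)
    (x : 𝔤) (hx𝔭 : x ∈ 𝔭) (hx : x ≠ 0) :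
    IsLeast
      {b : ℕ | ∀ y : Fin b → 𝔤,
        (∀ i, y i ∈ 𝔭) →
        (∀ i j, B (y i) (y j) = if i = j then 1 else 0) →
        (∀ i, B (y i) x = 0) →
        ∃ i, ⁅x, y i⁆ ≠ 0}
      (finrank ℝ ↥(𝔭 ⊓ LinearMap.ker (LieAlgebra.ad ℝ 𝔤 x))) := by
  set Z := 𝔭 ⊓ LinearMap.ker (LieAlgebra.ad ℝ 𝔤 x) with hZ
  have hxZ : x ∈ Z := ⟨hx𝔭, by simp⟩
  let f : Z →ₗ[ℝ] ℝ := (B x).comp Z.subtype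
  have hf : ∀ z : Z, f z = B x z := fun z => rfl
  have hrn := f.finrank_range_add_finrank_ker
  have hsurj : LinearMap.range f = ⊤ := by
    rw [LinearMap.range_eq_top]
    apply LinearMap.surjective
    intro h
    have := hposdef x hx
    have h2 : f ⟨x, hxZ⟩ = 0 := by rw [h]; rfl
    rw [hf] at h2
    exact this.ne' h2
  rw [hsurj, finrank_top, finrank_self] at hrn
  constructor
  · intro y hy ho hyx
    by_contra! hc
    have hyZ : ∀ i, y i ∈ Z := fun i => ⟨hy i, by simpa using hc i⟩
    let w : Fin (finrank ℝ Z) → LinearMap.ker f := fun i =>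
      ⟨⟨y i, hyZ i⟩, by rw [LinearMap.mem_ker, hf, hsymm]; exact hyx i⟩
    have hli : LinearIndependent ℝ y := by
      apply LinearMap.linearIndependent_of_isOrthoᵢ (B := B)
      · intro i j hij
        simpa [hij] using ho i j
      · intro i hi
        have h1 := ho i i
        have h2 : B (y i) (y i) = 0 := hi
        simp [h2] at h1
    have hw : LinearIndependent ℝ w :=
      LinearIndependent.of_comp (Z.subtype.comp (LinearMap.ker f).subtype) hli
    have := hw.fintype_card_le_finrank
    rw [Fintype.card_fin] at this
    omega
  · intro b hb
    by_contra! hlt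
    obtain ⟨v, hv⟩ := exists_orthonormal_aux ((B.restrict Z).restrict (LinearMap.ker f))
      (fun a c => hsymm _ _) (fun a ha => hposdef _ (by simpa using ha))
    have hle : b ≤ finrank ℝ (LinearMap.ker f) := by omega
    obtain ⟨i, hi⟩ := hb (fun i => ((v (Fin.castLE hle i) : Z) : 𝔤))
      (fun i => (v (Fin.castLE hle i) : Z).2.1)
      (fun i j => by
        have := hv (Fin.castLE hle i) (Fin.castLE hle j)
        simpa [(Fin.castLE_injective hle).eq_iff] using this)
      (fun i => by
        have := (v (Fin.castLE hle i)).2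
        rw [LinearMap.mem_ker, hf, hsymm] at this
        exact this)
    apply hi
    have := (v (Fin.castLE hle i) : Z).2.2
    simpa using this
end

section
/- Let 𝔤 be a finite-dimensional real Lie algebra equipped with an invariant inner product, and let 𝔥 ⊆ 𝔨 ⊊ 𝔤 be nested Lie subalgebras. Then max over nonzero x in 𝔨^⊥ of dim Z_{𝔨^⊥}(x) is at most max over nonzero x in 𝔥^⊥ of dim Z_{𝔥^⊥}(x); that is, b(𝔤,𝔨) ≤ b(𝔤,𝔥). -/
open Module

/-- For a Lie subalgebra with underlying submodule `𝔥` of a real Lie algebra `𝔤` with an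
inner product `B`, `bInv B 𝔥` is the maximum, over nonzero `x` in the orthogonal complement
`𝔭 = 𝔥^⊥`, of the dimension of the centralizer `Z_𝔭(x) = {y ∈ 𝔭 : ⁅x,y⁆ = 0}`.  For a normal
homogeneous space `G/H` this is the invariant `b(G/H)`. -/
noncomputable def bInv {𝔤 : Type*} [LieRing 𝔤] [LieAlgebra ℝ 𝔤]
    (B : LinearMap.BilinForm ℝ 𝔤) (𝔥 : Submodule ℝ 𝔤) : ℕ :=
  sSup {n : ℕ | ∃ x : 𝔤, x ∈ LinearMap.BilinForm.orthogonal B 𝔥 ∧ x ≠ 0 ∧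
    n = finrank ℝ ↥(LinearMap.BilinForm.orthogonal B 𝔥 ⊓
      LinearMap.ker (LieAlgebra.ad ℝ 𝔤 x))}

/-- Let `𝔤` be a finite-dimensional real Lie algebra with an invariant inner
product and `𝔥 ⊆ 𝔨 ⊊ 𝔤` nested Lie subalgebras.  Then `b(𝔤,𝔨) ≤ b(𝔤,𝔥)`. -/
theorem statement2 {𝔤 : Type*} [LieRing 𝔤] [LieAlgebra ℝ 𝔤] [Module.Finite ℝ 𝔤]
    (B : LinearMap.BilinForm ℝ 𝔤)
    (hsymm : ∀ x y : 𝔤, B x y = B y x)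
    (hposdef : ∀ x : 𝔤, x ≠ 0 → 0 < B x x)
    (hinv : ∀ x y z : 𝔤, B ⁅z, x⁆ y + B x ⁅z, y⁆ = 0)
    (𝔥 𝔨 : LieSubalgebra ℝ 𝔤) (h𝔥𝔨 : 𝔥 ≤ 𝔨) (h𝔨 : 𝔨 ≠ ⊤) :
    bInv B 𝔨.toSubmodule ≤ bInv B 𝔥.toSubmodule := by
  have hle : LinearMap.BilinForm.orthogonal B 𝔨.toSubmodule ≤
      LinearMap.BilinForm.orthogonal B 𝔥.toSubmodule :=
    LinearMap.BilinForm.orthogonal_le h𝔥𝔨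
  have hbdd : BddAbove {n : ℕ | ∃ x : 𝔤, x ∈ LinearMap.BilinForm.orthogonal B 𝔥.toSubmodule ∧
      x ≠ 0 ∧ n = finrank ℝ ↥(LinearMap.BilinForm.orthogonal B 𝔥.toSubmodule ⊓
        LinearMap.ker (LieAlgebra.ad ℝ 𝔤 x))} := by
    refine ⟨finrank ℝ 𝔤, ?_⟩
    rintro n ⟨x, -, -, rfl⟩
    exact Submodule.finrank_le _
  unfold bInv
  rcases Set.eq_empty_or_nonempty {n : ℕ | ∃ x : 𝔤,
      x ∈ LinearMap.BilinForm.orthogonal B 𝔨.toSubmodule ∧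
      x ≠ 0 ∧ n = finrank ℝ ↥(LinearMap.BilinForm.orthogonal B 𝔨.toSubmodule ⊓
        LinearMap.ker (LieAlgebra.ad ℝ 𝔤 x))} with he | hne
  · rw [he]
    simp
  · refine csSup_le hne ?_
    rintro n ⟨x, hx, hx0, rfl⟩
    exact (Submodule.finrank_mono (inf_le_inf_right _ hle)).trans
      (le_csSup hbdd ⟨x, hle hx, hx0, rfl⟩)
end

section
/- Let 𝔤 be a finite-dimensional real Lie algebra which is the direct sum of ideals 𝔤 = 𝔤₀ ⊕ 𝔤₁ ⊕ … ⊕ 𝔤_k, where 𝔤₀ is abelian and each 𝔤_i with i ≥ 1 is a simple Lie algebra. Let 𝔥 ⊊ 𝔤 be a Lie subalgebra, and let ⟨·,·⟩ and ⟪·,·⟫ be two invariant inner products on 𝔤, with 𝔭 and 𝔪 the orthogonal complements of 𝔥 with respect to ⟨·,·⟩ and ⟪·,·⟫ respectively. Then the maximum over nonzero x ∈ 𝔭 of dim{y ∈ 𝔭 : [x,y] = 0} equals the maximum over nonzero x ∈ 𝔪 of dim{y ∈ 𝔪 : [x,y] = 0}. In other words, the number b(G/H) is independent of the choice of normal homogeneous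 Riemannian metric on G/H. -/
open Module

lemma exists_intertwiner {𝔤 : Type*} [LieRing 𝔤] [LieAlgebra ℝ 𝔤] [Module.Finite ℝ 𝔤]
    (B B' : LinearMap.BilinForm ℝ 𝔤)
    (hposdef : ∀ x : 𝔤, x ≠ 0 → 0 < B x x)
    (hinv : ∀ x y z : 𝔤, B ⁅z, x⁆ y + B x ⁅z, y⁆ = 0)
    (hposdef' : ∀ x : 𝔤, x ≠ 0 → 0 < B' x x)
    (hinv' : ∀ x y z : 𝔤, B' ⁅z, x⁆ y + B' x ⁅z, y⁆ = 0) :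
    ∃ T : 𝔤 ≃ₗ[ℝ] 𝔤, (∀ x y, B (T x) y = B' x y) ∧ ∀ z x : 𝔤, T ⁅z, x⁆ = ⁅z, T x⁆ := by
  have key : ∀ C : LinearMap.BilinForm ℝ 𝔤, (∀ x : 𝔤, x ≠ 0 → 0 < C x x) →
      Function.Injective C := by
    intro C hC
    rw [injective_iff_map_eq_zero]
    intro x hx
    by_contra hne
    have := hC x hne
    rw [hx] at this
    simp at this
  let e : 𝔤 ≃ₗ[ℝ] Module.Dual ℝ 𝔤 :=
    LinearEquiv.ofInjectiveOfFinrankEq B (key B hposdef) Subspace.dual_finrank_eq.symm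
  let e' : 𝔤 ≃ₗ[ℝ] Module.Dual ℝ 𝔤 :=
    LinearEquiv.ofInjectiveOfFinrankEq B' (key B' hposdef') Subspace.dual_finrank_eq.symm
  have he : ∀ x, e x = B x := fun x => rfl
  have he' : ∀ x, e' x = B' x := fun x => rfl
  have hT : ∀ x y, B ((e'.trans e.symm) x) y = B' x y := by
    intro x y
    rw [← he, ← he']
    simp
  refine ⟨e'.trans e.symm, hT, ?_⟩
  intro z x
  apply key B hposdef
  ext y
  have h1 := hinv' x y z
  have h2 := hinv ((e'.trans e.symm) x) y z
  rw [hT] at h2 ⊢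
  linarith

lemma bInv_set_subset {𝔤 : Type*} [LieRing 𝔤] [LieAlgebra ℝ 𝔤] [Module.Finite ℝ 𝔤]
    (𝔥 : Submodule ℝ 𝔤)
    (B B' : LinearMap.BilinForm ℝ 𝔤)
    (hsymm : ∀ x y : 𝔤, B x y = B y x)
    (hposdef : ∀ x : 𝔤, x ≠ 0 → 0 < B x x)
    (hinv : ∀ x y z : 𝔤, B ⁅z, x⁆ y + B x ⁅z, y⁆ = 0)
    (hsymm' : ∀ x y : 𝔤, B' x y = B' y x)
    (hposdef' : ∀ x : 𝔤, x ≠ 0 → 0 < B' x x)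
    (hinv' : ∀ x y z : 𝔤, B' ⁅z, x⁆ y + B' x ⁅z, y⁆ = 0) :
    {n : ℕ | ∃ x : 𝔤, x ∈ LinearMap.BilinForm.orthogonal B' 𝔥 ∧ x ≠ 0 ∧
      n = finrank ℝ ↥(LinearMap.BilinForm.orthogonal B' 𝔥 ⊓
        LinearMap.ker (LieAlgebra.ad ℝ 𝔤 x))} ⊆
    {n : ℕ | ∃ x : 𝔤, x ∈ LinearMap.BilinForm.orthogonal B 𝔥 ∧ x ≠ 0 ∧
      n = finrank ℝ ↥(LinearMap.BilinForm.orthogonal B 𝔥 ⊓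
        LinearMap.ker (LieAlgebra.ad ℝ 𝔤 x))} := by
  obtain ⟨T, hT, hc⟩ := exists_intertwiner B B' hposdef hinv hposdef' hinv'
  have hmem : ∀ x, T x ∈ LinearMap.BilinForm.orthogonal B 𝔥 ↔
      x ∈ LinearMap.BilinForm.orthogonal B' 𝔥 := by
    intro x
    simp only [LinearMap.BilinForm.mem_orthogonal_iff]
    refine forall₂_congr fun n _ => ?_
    rw [hsymm, hT, hsymm']
  have hbr : ∀ x y, ⁅T x, T y⁆ = T (T ⁅x, y⁆) := by
    intro x y
    rw [← hc, ← lie_skew, ← hc, ← map_neg, lie_skew]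
  rintro n ⟨x, hx, hx0, rfl⟩
  refine ⟨T x, (hmem x).2 hx, by simpa using hx0, ?_⟩
  rw [← LinearEquiv.finrank_map_eq T]
  suffices h : Submodule.map (T : 𝔤 →ₗ[ℝ] 𝔤) (LinearMap.BilinForm.orthogonal B' 𝔥 ⊓
      LinearMap.ker (LieAlgebra.ad ℝ 𝔤 x)) = LinearMap.BilinForm.orthogonal B 𝔥 ⊓
        LinearMap.ker (LieAlgebra.ad ℝ 𝔤 (T x)) by rw [h]
  ext w
  obtain ⟨y, rfl⟩ := T.surjective w
  simp [hmem, hbr]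

/-- Let `𝔤` be a finite-dimensional real Lie algebra that is the direct sum
of ideals `𝔤 = 𝔤₀ ⊕ 𝔤₁ ⊕ … ⊕ 𝔤_k` with `𝔤₀` abelian and each `𝔤_i`, `i ≥ 1`, simple.  Let
`𝔥 ⊊ 𝔤` be a Lie subalgebra and `B`, `B'` two invariant inner products on `𝔤`.  Then the
maximum over nonzero `x` in the `B`-orthogonal complement of `𝔥` of the dimension of the
centralizer of `x` therein coincides with the corresponding maximum for `B'`: the invariant
`b(G/H)` is independent of the choice of normal homogeneous metric. -/
theorem statement3 {𝔤 : Type*} [LieRing 𝔤] [LieAlgebra ℝ 𝔤] [Module.Finite ℝ 𝔤]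
    {k : ℕ} (I : Fin (k + 1) → LieIdeal ℝ 𝔤)
    (hInternal : DirectSum.IsInternal fun i => (I i).toSubmodule)
    (habelian : IsLieAbelian ↥(I 0))
    (hsimple : ∀ i : Fin (k + 1), i ≠ 0 → LieAlgebra.IsSimple ℝ ↥(I i))
    (𝔥 : LieSubalgebra ℝ 𝔤) (h𝔥 : 𝔥 ≠ ⊤)
    (B B' : LinearMap.BilinForm ℝ 𝔤)
    (hsymm : ∀ x y : 𝔤, B x y = B y x)
    (hposdef : ∀ x : 𝔤, x ≠ 0 → 0 < B x x)
    (hinv : ∀ x y z : 𝔤, B ⁅z, x⁆ y + B x ⁅z, y⁆ = 0)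
    (hsymm' : ∀ x y : 𝔤, B' x y = B' y x)
    (hposdef' : ∀ x : 𝔤, x ≠ 0 → 0 < B' x x)
    (hinv' : ∀ x y z : 𝔤, B' ⁅z, x⁆ y + B' x ⁅z, y⁆ = 0) :
    bInv B 𝔥.toSubmodule = bInv B' 𝔥.toSubmodule := by
  unfold bInv
  congr 1
  exact Set.Subset.antisymm
    (bInv_set_subset _ B' B hsymm' hposdef' hinv' hsymm hposdef hinv)
    (bInv_set_subset _ B B' hsymm hposdef hinv hsymm' hposdef' hinv')
end

section
/- Let ι be a nonempty finite index set, and for each j ∈ ι let 𝔤_j be a finite-dimensional real Lie algebra with an invariant inner product and 𝔥_j ⊊ 𝔤_j a Lie subalgebra, with 𝔭_j the orthogonal complement of 𝔥_j in 𝔤_j (assumed nonzero). Equip the product Lie algebra 𝔤 = Π_j 𝔤_j with the product inner product, and let 𝔥 = Π_j 𝔥_j, so that the orthogonal complement of 𝔥 in 𝔤 is 𝔭 = Π_j 𝔭_j. Then b(𝔤,𝔥) = max over j ∈ ι of ( b(𝔤_j,𝔥_j) + dim 𝔭 − dim 𝔭_j ). In particular, for a normal homogeneous product G/H = G₁/H₁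 × … × G_s/H_s one has b(G/H) = max_j ( b(G_j/H_j) + dim G/H − dim G_j/H_j ). -/
open Module

section PiLie

variable {ι : Type*} {L : ι → Type*}

/-- The product of a family of Lie rings, with componentwise bracket. -/
instance Pi.instLieRing [∀ i, LieRing (L i)] : LieRing (∀ i, L i) :=
  { (inferInstance : AddCommGroup (∀ i, L i)) with
    bracket := fun x y i => ⁅x i, y i⁆
    add_lie := fun x y z => funext fun i => add_lie (x i) (y i) (z i)
    lie_add := fun x y z => funext fun i => lie_add (x i) (y i) (z i)
    lie_self := fun x => funext fun i => lie_self (x i)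
    leibniz_lie := fun x y z => funext fun i => leibniz_lie (x i) (y i) (z i) }

/-- The product of a family of real Lie algebras. -/
instance Pi.instLieAlgebra [∀ i, LieRing (L i)] [∀ i, LieAlgebra ℝ (L i)] :
    LieAlgebra ℝ (∀ i, L i) :=
  { (inferInstance : Module ℝ (∀ i, L i)) with
    lie_smul := fun t x y => funext fun i => lie_smul t (x i) (y i) }

end PiLie

lemma aux_finrank_pi {ι : Type*} [Fintype ι] (V : ι → Type*) [∀ j, AddCommGroup (V j)]
    [∀ j, Module ℝ (V j)] [∀ j, Module.Finite ℝ (V j)] (p : ∀ j, Submodule ℝ (V j)) :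
    finrank ℝ ↥(Submodule.pi Set.univ p) = ∑ j, finrank ℝ ↥(p j) := by
  rw [← Module.finrank_pi_fintype ℝ]
  refine LinearEquiv.finrank_eq
    { toFun := fun x j => ⟨x.1 j, x.2 j (Set.mem_univ j)⟩
      invFun := fun y => ⟨fun j => (y j).1, fun j _ => (y j).2⟩
      map_add' := fun x y => rfl
      map_smul' := fun c x => rfl
      left_inv := fun x => rfl
      right_inv := fun x => rfl }

lemma aux_bdd {𝔤 : Type*} [LieRing 𝔤] [LieAlgebra ℝ 𝔤] [Module.Finite ℝ 𝔤]
    (B : LinearMap.BilinForm ℝ 𝔤) (𝔥 : Submodule ℝ 𝔤) :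
    BddAbove {n : ℕ | ∃ x : 𝔤, x ∈ LinearMap.BilinForm.orthogonal B 𝔥 ∧ x ≠ 0 ∧
    n = finrank ℝ ↥(LinearMap.BilinForm.orthogonal B 𝔥 ⊓
      LinearMap.ker (LieAlgebra.ad ℝ 𝔤 x))} := by
  refine ⟨finrank ℝ 𝔤, ?_⟩
  rintro n ⟨x, -, -, rfl⟩
  exact Submodule.finrank_le _

lemma aux_le {𝔤 : Type*} [LieRing 𝔤] [LieAlgebra ℝ 𝔤] [Module.Finite ℝ 𝔤]
    (B : LinearMap.BilinForm ℝ 𝔤) (𝔥 : Submodule ℝ 𝔤) (x : 𝔤)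
    (hx : x ∈ LinearMap.BilinForm.orthogonal B 𝔥) (h0 : x ≠ 0) :
    finrank ℝ ↥(LinearMap.BilinForm.orthogonal B 𝔥 ⊓
      LinearMap.ker (LieAlgebra.ad ℝ 𝔤 x)) ≤ bInv B 𝔥 :=
  le_csSup (aux_bdd B 𝔥) ⟨x, hx, h0, rfl⟩

lemma aux_att {𝔤 : Type*} [LieRing 𝔤] [LieAlgebra ℝ 𝔤] [Module.Finite ℝ 𝔤]
    (B : LinearMap.BilinForm ℝ 𝔤) (𝔥 : Submodule ℝ 𝔤)
    (h : LinearMap.BilinForm.orthogonal B 𝔥 ≠ ⊥) :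
    ∃ x : 𝔤, x ∈ LinearMap.BilinForm.orthogonal B 𝔥 ∧ x ≠ 0 ∧
    bInv B 𝔥 = finrank ℝ ↥(LinearMap.BilinForm.orthogonal B 𝔥 ⊓
      LinearMap.ker (LieAlgebra.ad ℝ 𝔤 x)) := by
  obtain ⟨x, hx, h0⟩ := Submodule.exists_mem_ne_zero_of_ne_bot h
  exact Nat.sSup_mem (s := {n : ℕ | ∃ x : 𝔤, x ∈ LinearMap.BilinForm.orthogonal B 𝔥 ∧ x ≠ 0 ∧
    n = finrank ℝ ↥(LinearMap.BilinForm.orthogonal B 𝔥 ⊓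
      LinearMap.ker (LieAlgebra.ad ℝ 𝔤 x))}) ⟨_, x, hx, h0, rfl⟩ (aux_bdd B 𝔥)

/-- For a nonempty finite family of finite-dimensional real Lie algebras
`𝔤 j` with invariant inner products `B j` and proper Lie subalgebras `𝔥 j` (with nonzero
orthogonal complements `𝔭 j`), the invariant `b` of the product `(Π 𝔤 j, Π 𝔥 j)` with the
product inner product equals `max_j (b(𝔤 j, 𝔥 j) + dim 𝔭 − dim 𝔭 j)`, where `𝔭 = Π 𝔭 j` is
the orthogonal complement of `Π 𝔥 j`. -/
theorem statement6 {ι : Type*} [Fintype ι] [Nonempty ι] [DecidableEq ι]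
    (𝔤 : ι → Type*) [∀ j, LieRing (𝔤 j)] [∀ j, LieAlgebra ℝ (𝔤 j)]
    [∀ j, Module.Finite ℝ (𝔤 j)]
    (B : ∀ j, LinearMap.BilinForm ℝ (𝔤 j))
    (hsymm : ∀ j, ∀ x y : 𝔤 j, B j x y = B j y x)
    (hposdef : ∀ j, ∀ x : 𝔤 j, x ≠ 0 → 0 < B j x x)
    (hinv : ∀ j, ∀ x y z : 𝔤 j, B j ⁅z, x⁆ y + B j x ⁅z, y⁆ = 0)
    (𝔥 : ∀ j, LieSubalgebra ℝ (𝔤 j)) (h𝔥 : ∀ j, 𝔥 j ≠ ⊤)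
    (h𝔭 : ∀ j, LinearMap.BilinForm.orthogonal (B j) (𝔥 j).toSubmodule ≠ ⊥)
    (Bprod : LinearMap.BilinForm ℝ (∀ j, 𝔤 j))
    (hBprod : ∀ x y : ∀ j, 𝔤 j, Bprod x y = ∑ j, B j (x j) (y j))
    (𝔥prod : Submodule ℝ (∀ j, 𝔤 j))
    (h𝔥prod : 𝔥prod = Submodule.pi Set.univ fun j => (𝔥 j).toSubmodule) :
    bInv Bprod 𝔥prod =
      Finset.univ.sup fun j =>
        bInv (B j) (𝔥 j).toSubmodule
          + finrank ℝ ↥(LinearMap.BilinForm.orthogonal Bprod 𝔥prod)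
          - finrank ℝ ↥(LinearMap.BilinForm.orthogonal (B j) (𝔥 j).toSubmodule) := by
  classical
  have horth : LinearMap.BilinForm.orthogonal Bprod 𝔥prod =
      Submodule.pi Set.univ fun j =>
        LinearMap.BilinForm.orthogonal (B j) (𝔥 j).toSubmodule := by
    subst h𝔥prod
    ext x
    constructor
    · intro hx j _ y hy
      have h1 := hx (Pi.single j y) (by
        intro k _
        by_cases hk : k = j
        · subst hk; simpa using hy
        · rw [Pi.single_eq_of_ne hk]; exact Submodule.zero_mem _)
      change Bprod _ _ = 0 at h1
      change B j y (x j) = 0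
      rw [hBprod, Finset.sum_eq_single j] at h1
      · simpa using h1
      · intro k _ hk
        rw [Pi.single_eq_of_ne hk]; simp
      · simp
    · intro hx y hy
      change Bprod _ _ = 0
      rw [hBprod]
      exact Finset.sum_eq_zero fun j hj => hx j (Set.mem_univ j) (y j) (hy j (Set.mem_univ j))
  have hfin : finrank ℝ ↥(LinearMap.BilinForm.orthogonal Bprod 𝔥prod) =
      ∑ j, finrank ℝ ↥(LinearMap.BilinForm.orthogonal (B j) (𝔥 j).toSubmodule) := by
    rw [horth, aux_finrank_pi]
  have hcent : ∀ x : ∀ j, 𝔤 j, finrank ℝ ↥(LinearMap.BilinForm.orthogonal Bprod 𝔥prod ⊓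
      LinearMap.ker (LieAlgebra.ad ℝ (∀ j, 𝔤 j) x)) =
      ∑ j, finrank ℝ ↥(LinearMap.BilinForm.orthogonal (B j) (𝔥 j).toSubmodule ⊓
        LinearMap.ker (LieAlgebra.ad ℝ (𝔤 j) (x j))) := by
    intro x
    rw [← aux_finrank_pi]
    have : LinearMap.BilinForm.orthogonal Bprod 𝔥prod ⊓
      LinearMap.ker (LieAlgebra.ad ℝ (∀ j, 𝔤 j) x) = Submodule.pi Set.univ fun j =>
        (LinearMap.BilinForm.orthogonal (B j) (𝔥 j).toSubmodule ⊓
        LinearMap.ker (LieAlgebra.ad ℝ (𝔤 j) (x j))) := by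
      rw [horth]
      ext y
      constructor
      · rintro ⟨h1, h2⟩ j hj
        exact ⟨h1 j hj, congrFun h2 j⟩
      · intro h
        exact ⟨fun j hj => (h j hj).1, funext fun j => (h j (Set.mem_univ j)).2⟩
    rw [this]
  have hple : ∀ j (x : 𝔤 j), finrank ℝ ↥(LinearMap.BilinForm.orthogonal (B j) (𝔥 j).toSubmodule ⊓
        LinearMap.ker (LieAlgebra.ad ℝ (𝔤 j) x)) ≤
        finrank ℝ ↥(LinearMap.BilinForm.orthogonal (B j) (𝔥 j).toSubmodule) :=
    fun j x => Submodule.finrank_mono inf_le_left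
  apply le_antisymm
  · have hne : LinearMap.BilinForm.orthogonal Bprod 𝔥prod ≠ ⊥ := by
      obtain ⟨j⟩ := ‹Nonempty ι›
      obtain ⟨x, hx, h0⟩ := Submodule.exists_mem_ne_zero_of_ne_bot (h𝔭 j)
      intro hb
      have : (Pi.single j x : ∀ j, 𝔤 j) ∈ LinearMap.BilinForm.orthogonal Bprod 𝔥prod := by
        rw [horth]
        intro k _
        by_cases hk : k = j
        · subst hk; simpa using hx
        · rw [Pi.single_eq_of_ne hk]; exact Submodule.zero_mem _
      rw [hb, Submodule.mem_bot, Pi.single_eq_zero_iff] at this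
      exact h0 this
    obtain ⟨x, hx, h0, hb⟩ := aux_att Bprod 𝔥prod hne
    obtain ⟨j, hj⟩ := Function.ne_iff.1 h0
    refine le_trans ?_ (Finset.le_sup (Finset.mem_univ j))
    rw [horth] at hx
    have h1 := aux_le (B j) (𝔥 j).toSubmodule (x j) (hx j (Set.mem_univ j)) hj
    rw [hb, hcent, hfin, ← Finset.add_sum_erase _ _ (Finset.mem_univ j),
      ← Finset.add_sum_erase _ _ (Finset.mem_univ j)]
    have h2 := Finset.sum_le_sum fun k (_ : k ∈ Finset.univ.erase j) => hple k (x k)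
    omega
  · refine Finset.sup_le fun j _ => ?_
    obtain ⟨x, hx, h0, hb⟩ := aux_att (B j) (𝔥 j).toSubmodule (h𝔭 j)
    have hm : (Pi.single j x : ∀ j, 𝔤 j) ∈ LinearMap.BilinForm.orthogonal Bprod 𝔥prod := by
      rw [horth]
      intro k _
      by_cases hk : k = j
      · subst hk; simpa using hx
      · rw [Pi.single_eq_of_ne hk]; exact Submodule.zero_mem _
    have h1 := aux_le Bprod 𝔥prod (Pi.single j x) hm (by
      intro h; exact h0 (Pi.single_eq_zero_iff.1 h))
    rw [hcent, ← Finset.add_sum_erase _ _ (Finset.mem_univ j), Pi.single_eq_same, ← hb] at h1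
    have h2 : ∑ k ∈ Finset.univ.erase j,
        finrank ℝ ↥(LinearMap.BilinForm.orthogonal (B k) (𝔥 k).toSubmodule ⊓
        LinearMap.ker (LieAlgebra.ad ℝ (𝔤 k) ((Pi.single j x : ∀ j, 𝔤 j) k))) =
        ∑ k ∈ Finset.univ.erase j,
        finrank ℝ ↥(LinearMap.BilinForm.orthogonal (B k) (𝔥 k).toSubmodule) := by
      refine Finset.sum_congr rfl fun k hk => ?_
      rw [Pi.single_eq_of_ne (Finset.ne_of_mem_erase hk), map_zero, LinearMap.ker_zero, inf_top_eq]
    rw [h2] at h1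
    rw [hfin, ← Finset.add_sum_erase _ _ (Finset.mem_univ j)]
    omega
end

section
/- Let 𝔤 be a finite-dimensional real Lie algebra equipped with an invariant inner product, let 𝔥 be a Lie subalgebra of 𝔤, and let 𝔭 be the orthogonal complement of 𝔥 in 𝔤. Then for every x ∈ 𝔭, dim Z_𝔤(x) ≥ 2·dim Z_𝔭(x) + dim 𝔥 − dim 𝔭, where Z_𝔤(x) = {y ∈ 𝔤 : [x,y] = 0} and Z_𝔭(x) = {y ∈ 𝔭 : [x,y] = 0}. -/
open Module

/-- Let `𝔤` be a finite-dimensional real Lie algebra with an invariant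
inner product `B`, `𝔥` a Lie subalgebra and `𝔭` its orthogonal complement.  Then for every
`x ∈ 𝔭`, `dim Z_𝔤(x) ≥ 2 dim Z_𝔭(x) + dim 𝔥 − dim 𝔭`. -/
theorem statement7 {𝔤 : Type*} [LieRing 𝔤] [LieAlgebra ℝ 𝔤] [Module.Finite ℝ 𝔤]
    (B : LinearMap.BilinForm ℝ 𝔤)
    (hsymm : ∀ x y : 𝔤, B x y = B y x)
    (hposdef : ∀ x : 𝔤, x ≠ 0 → 0 < B x x)
    (hinv : ∀ x y z : 𝔤, B ⁅z, x⁆ y + B x ⁅z, y⁆ = 0)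
    (𝔥 : LieSubalgebra ℝ 𝔤)
    (𝔭 : Submodule ℝ 𝔤) (h𝔭 : 𝔭 = LinearMap.BilinForm.orthogonal B 𝔥.toSubmodule)
    (x : 𝔤) (hx : x ∈ 𝔭) :
    (finrank ℝ ↥(LinearMap.ker (LieAlgebra.ad ℝ 𝔤 x)) : ℤ) ≥
      2 * (finrank ℝ ↥(𝔭 ⊓ LinearMap.ker (LieAlgebra.ad ℝ 𝔤 x)) : ℤ)
        + (finrank ℝ ↥𝔥 : ℤ) - (finrank ℝ ↥𝔭 : ℤ) := by
  have h0 : ∀ w : 𝔤, B w w = 0 → w = 0 := by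
    intro w hw
    by_contra h
    exact (hposdef w h).ne' hw
  have hp : ∀ w : 𝔤, w ∈ 𝔭 ↔ ∀ n ∈ 𝔥, B n w = 0 := by
    intro w
    rw [h𝔭]
    rfl
  have hle : ∀ S T U : Submodule ℝ 𝔤, S ≤ U → T ≤ U → (∀ w ∈ S, w ∈ T → w = 0) →
      finrank ℝ S + finrank ℝ T ≤ finrank ℝ U := by
    intro S T U hS hT hd
    have hb : S ⊓ T = ⊥ := (Submodule.eq_bot_iff _).2 fun w hw => hd w hw.1 hw.2
    have h1 := Submodule.finrank_sup_add_finrank_inf_eq S T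
    rw [hb, finrank_bot] at h1
    have h2 := Submodule.finrank_mono (sup_le hS hT)
    omega
  have h1 := hle (𝔥.toSubmodule ⊓ LinearMap.ker (LieAlgebra.ad ℝ 𝔤 x))
    (𝔭 ⊓ LinearMap.ker (LieAlgebra.ad ℝ 𝔤 x)) (LinearMap.ker (LieAlgebra.ad ℝ 𝔤 x))
    inf_le_right inf_le_right (fun w hw hw' => h0 w ((hp w).1 hw'.1 w hw.1))
  have h2 := hle (𝔥.toSubmodule.map (LieAlgebra.ad ℝ 𝔤 x : 𝔤 →ₗ[ℝ] 𝔤))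
    (𝔭 ⊓ LinearMap.ker (LieAlgebra.ad ℝ 𝔤 x)) 𝔭
    (by
      rintro _ ⟨a, ha, rfl⟩
      refine (hp _).2 fun n hn => ?_
      have e := hinv n x a
      have e2 := (hp x).1 hx ⁅a, n⁆ (𝔥.lie_mem ha hn)
      change B n ⁅x, a⁆ = 0
      rw [← lie_skew, map_neg]
      linarith)
    inf_le_left
    (by
      rintro _ ⟨a, ha, rfl⟩ hw
      apply h0
      have hk : ⁅x, (LieAlgebra.ad ℝ 𝔤 x) a⁆ = 0 := hw.2
      have e := hinv a ((LieAlgebra.ad ℝ 𝔤 x) a) x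
      rw [hk, map_zero, add_zero] at e
      exact e)
  have h3 := LinearMap.finrank_range_add_finrank_ker
    ((LieAlgebra.ad ℝ 𝔤 x : 𝔤 →ₗ[ℝ] 𝔤).domRestrict 𝔥.toSubmodule)
  rw [LinearMap.range_domRestrict, LinearMap.ker_domRestrict] at h3
  change _ + finrank ℝ (Submodule.comap 𝔥.toSubmodule.subtype
    (LinearMap.ker (LieAlgebra.ad ℝ 𝔤 x))) = _ at h3
  have h4 := Submodule.finrank_map_subtype_eq 𝔥.toSubmodule
    (Submodule.comap 𝔥.toSubmodule.subtype (LinearMap.ker (LieAlgebra.ad ℝ 𝔤 x)))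
  rw [Submodule.map_comap_subtype] at h4
  have h5 : finrank ℝ 𝔥.toSubmodule = finrank ℝ 𝔥 := rfl
  omega
end

section
/- Let 𝔤 be a finite-dimensional real Lie algebra equipped with an invariant inner product, let 𝔥 ⊊ 𝔤 be a Lie subalgebra, and let 𝔭 be the orthogonal complement of 𝔥 in 𝔤. Then the maximum over nonzero x ∈ 𝔭 of dim Z_𝔭(x) is at most one half of ( (the maximum over nonzero x ∈ 𝔤 of dim Z_𝔤(x)) + dim 𝔭 − dim 𝔥 ). In other words, b(G/H) ≤ ½( b(G) + dim G/H − dim H ) for a normal homogeneous space G/H. -/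
open Module

/-- The maximum over nonzero `x ∈ 𝔤` of `dim Z_𝔤(x)`; this is `b(G)` for a compact Lie
group `G` with bi-invariant metric. -/
noncomputable def bFull (𝔤 : Type*) [LieRing 𝔤] [LieAlgebra ℝ 𝔤] : ℕ :=
  sSup {n : ℕ | ∃ x : 𝔤, x ≠ 0 ∧
    n = finrank ℝ ↥(LinearMap.ker (LieAlgebra.ad ℝ 𝔤 x))}

theorem aux_isCompl {V : Type*} [AddCommGroup V] [Module ℝ V] [Module.Finite ℝ V]
    (B : LinearMap.BilinForm ℝ V)
    (hsymm : ∀ x y : V, B x y = B y x)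
    (hposdef : ∀ x : V, x ≠ 0 → 0 < B x x) (W : Submodule ℝ V) :
    IsCompl W (B.orthogonal W) := by
  have hr : B.IsRefl := fun x y h => by rw [hsymm]; exact h
  rw [← LinearMap.BilinForm.restrict_nondegenerate_iff_isCompl_orthogonal hr]
  refine ⟨?_, ?_⟩ <;>
  · intro x hx
    by_contra hne
    have h1 := hposdef (x : V) (by simpa using hne)
    have h2 := hx x
    simp at h2
    linarith

theorem aux_main {𝔤 : Type*} [LieRing 𝔤] [LieAlgebra ℝ 𝔤] [Module.Finite ℝ 𝔤]
    (B : LinearMap.BilinForm ℝ 𝔤)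
    (hsymm : ∀ x y : 𝔤, B x y = B y x)
    (hposdef : ∀ x : 𝔤, x ≠ 0 → 0 < B x x)
    (hinv : ∀ x y z : 𝔤, B ⁅z, x⁆ y + B x ⁅z, y⁆ = 0)
    (𝔥 : LieSubalgebra ℝ 𝔤) (x : 𝔤) (hx : x ∈ B.orthogonal 𝔥.toSubmodule) :
    2 * finrank ℝ ↥(B.orthogonal 𝔥.toSubmodule ⊓ LinearMap.ker (LieAlgebra.ad ℝ 𝔤 x))
      + finrank ℝ ↥𝔥.toSubmodule ≤ finrank ℝ ↥(LinearMap.ker (LieAlgebra.ad ℝ 𝔤 x)) +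
        finrank ℝ ↥(B.orthogonal 𝔥.toSubmodule) := by
  have hc := aux_isCompl B hsymm hposdef 𝔥.toSubmodule
  set p := B.orthogonal 𝔥.toSubmodule with hp
  set A : 𝔤 →ₗ[ℝ] 𝔤 := LieAlgebra.ad ℝ 𝔤 x with hA
  set Z := p ⊓ LinearMap.ker A with hZ
  have hAx : ∀ y, A y = ⁅x, y⁆ := fun y => rfl
  have e1 := Submodule.finrank_add_eq_of_isCompl hc
  have e2 := LinearMap.finrank_range_add_finrank_ker A
  have e3 := LinearMap.finrank_range_add_finrank_ker (A.domRestrict p)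
  have e4 : finrank ℝ (LinearMap.ker (A.domRestrict p)) = finrank ℝ Z := by
    rw [LinearMap.ker_domRestrict, ← Submodule.finrank_map_subtype_eq p,
      Submodule.map_comap_subtype]
  rw [LinearMap.range_domRestrict] at e3
  have e5 : LinearMap.range A = 𝔥.toSubmodule.map A ⊔ p.map A := by
    rw [← Submodule.map_sup, hc.sup_eq_top, LinearMap.range_eq_map]
  have e6 := Submodule.finrank_add_le_finrank_add_finrank (𝔥.toSubmodule.map A) (p.map A)
  rw [← e5] at e6
  have hd : 𝔥.toSubmodule.map A ⊓ Z = ⊥ := by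
    rw [eq_bot_iff]
    rintro _ ⟨⟨h, hh, rfl⟩, hz⟩
    by_contra hne
    have h1 := hposdef (A h) (by simpa using hne)
    have h2 := hinv h (A h) x
    have h3 : ⁅x, A h⁆ = 0 := hz.2
    rw [h3, ← hAx] at h2
    simp at h2
    linarith
  have hle : 𝔥.toSubmodule.map A ≤ p := by
    rintro _ ⟨h, hh, rfl⟩
    rw [hp, LinearMap.BilinForm.mem_orthogonal_iff]
    intro k hk
    have h1 := hinv k x h
    have h2 : B ⁅h, k⁆ x = 0 := hx _ (𝔥.lie_mem hh hk)
    change B k (A h) = 0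
    rw [hAx, ← lie_skew, map_neg]
    linarith
  have e7 := Submodule.finrank_sup_add_finrank_inf_eq (𝔥.toSubmodule.map A) Z
  have e8 : finrank ℝ ↥(𝔥.toSubmodule.map A ⊔ Z) ≤ finrank ℝ p :=
    Submodule.finrank_mono (sup_le hle inf_le_left)
  rw [hd, finrank_bot] at e7
  omega

/-- Let `𝔤` be a finite-dimensional real Lie algebra with an invariant
inner product, `𝔥 ⊊ 𝔤` a Lie subalgebra and `𝔭` its orthogonal complement.  Then
`b(G/H) ≤ ½ (b(G) + dim 𝔭 − dim 𝔥)`. -/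
theorem statement8 {𝔤 : Type*} [LieRing 𝔤] [LieAlgebra ℝ 𝔤] [Module.Finite ℝ 𝔤]
    (B : LinearMap.BilinForm ℝ 𝔤)
    (hsymm : ∀ x y : 𝔤, B x y = B y x)
    (hposdef : ∀ x : 𝔤, x ≠ 0 → 0 < B x x)
    (hinv : ∀ x y z : 𝔤, B ⁅z, x⁆ y + B x ⁅z, y⁆ = 0)
    (𝔥 : LieSubalgebra ℝ 𝔤) (h𝔥 : 𝔥 ≠ ⊤) :
    (bInv B 𝔥.toSubmodule : ℚ) ≤
      ((bFull 𝔤 : ℚ)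
        + (finrank ℝ ↥(LinearMap.BilinForm.orthogonal B 𝔥.toSubmodule) : ℚ)
        - (finrank ℝ ↥𝔥 : ℚ)) / 2 := by
  have hc := aux_isCompl B hsymm hposdef 𝔥.toSubmodule
  have hmem : bInv B 𝔥.toSubmodule ∈ {n : ℕ | ∃ x : 𝔤,
      x ∈ LinearMap.BilinForm.orthogonal B 𝔥.toSubmodule ∧ x ≠ 0 ∧
      n = finrank ℝ ↥(LinearMap.BilinForm.orthogonal B 𝔥.toSubmodule ⊓
        LinearMap.ker (LieAlgebra.ad ℝ 𝔤 x))} := by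
    apply Nat.sSup_mem
    · have hne : B.orthogonal 𝔥.toSubmodule ≠ ⊥ := by
        intro h0
        rw [h0] at hc
        apply h𝔥
        have := hc.sup_eq_top
        rw [sup_bot_eq] at this
        rwa [← LieSubalgebra.toSubmodule_inj]
      obtain ⟨x, hx, hx0⟩ := Submodule.exists_mem_ne_zero_of_ne_bot hne
      exact ⟨_, x, hx, hx0, rfl⟩
    · refine ⟨finrank ℝ 𝔤, ?_⟩
      rintro n ⟨x, -, -, rfl⟩
      exact Submodule.finrank_le _
  obtain ⟨x, hx, hx0, hn⟩ := hmem
  have h1 := aux_main B hsymm hposdef hinv 𝔥 x hx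
  have h2 : finrank ℝ ↥(LinearMap.ker (LieAlgebra.ad ℝ 𝔤 x)) ≤ bFull 𝔤 := by
    apply le_csSup
    · refine ⟨finrank ℝ 𝔤, ?_⟩
      rintro n ⟨x, -, rfl⟩
      exact Submodule.finrank_le _
    · exact ⟨x, hx0, rfl⟩
  rw [← hn] at h1
  have h3 : 2 * bInv B 𝔥.toSubmodule + finrank ℝ ↥𝔥 ≤ bFull 𝔤 +
      finrank ℝ ↥(B.orthogonal 𝔥.toSubmodule) := h1.trans (by omega)
  have h4 : (2 * bInv B 𝔥.toSubmodule + finrank ℝ ↥𝔥 : ℚ) ≤ bFull 𝔤 +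
      finrank ℝ ↥(B.orthogonal 𝔥.toSubmodule) := by exact_mod_cast h3
  linarith
end

section
/- Let V be a finite-dimensional real vector space, let Σ be a finite set of linear functionals on V, and let α₁, …, α_r be linearly independent linear functionals on V such that every λ ∈ Σ can be written as λ = Σ_i a_i α_i with real coefficients a_i that are either all ≥ 0 or all ≤ 0. Let x ∈ V satisfy α_i(x) ≥ 0 for all i, and set Φ = {α_i : α_i(x) = 0}. Then for every λ ∈ Σ one has λ(x) = 0 if and only if λ lies in the linear span of Φ. -/
/-- Let `V` be a finite-dimensional real vector space, `S` a finite set of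
linear functionals on `V`, and `α₁, …, α_r` linearly independent functionals such that every
`λ ∈ S` is a linear combination of the `α i` with coefficients all `≥ 0` or all `≤ 0`.  If
`x ∈ V` satisfies `α i x ≥ 0` for all `i`, and `Φ = {α i : α i x = 0}`, then for every
`λ ∈ S` one has `λ x = 0` iff `λ` lies in the span of `Φ`. -/
theorem statement11 {V : Type*} [AddCommGroup V] [Module ℝ V] [FiniteDimensional ℝ V]
    (S : Set (V →ₗ[ℝ] ℝ)) (hS : S.Finite)
    {r : ℕ} (α : Fin r → (V →ₗ[ℝ] ℝ)) (hα : LinearIndependent ℝ α)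
    (hdecomp : ∀ l ∈ S, ∃ a : Fin r → ℝ,
      l = ∑ i, a i • α i ∧ ((∀ i, 0 ≤ a i) ∨ (∀ i, a i ≤ 0)))
    (x : V) (hx : ∀ i, 0 ≤ α i x) :
    ∀ l ∈ S, (l x = 0 ↔ l ∈ Submodule.span ℝ {f | ∃ i, α i x = 0 ∧ f = α i}) := by
  intro l hl
  constructor
  · intro h0
    obtain ⟨a, rfl, ha⟩ := hdecomp l hl
    have h1 : ∑ i, a i * α i x = 0 := by
      simpa [LinearMap.sum_apply] using h0
    have h2 : ∀ i, a i * α i x = 0 := by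
      rcases ha with ha | ha
      · intro i
        exact (Finset.sum_eq_zero_iff_of_nonneg
          (fun i _ => mul_nonneg (ha i) (hx i))).1 h1 i (Finset.mem_univ i)
      · intro i
        exact (Finset.sum_eq_zero_iff_of_nonpos
          (fun i _ => mul_nonpos_of_nonpos_of_nonneg (ha i) (hx i))).1 h1 i (Finset.mem_univ i)
    refine Submodule.sum_mem _ fun i _ => ?_
    rcases mul_eq_zero.1 (h2 i) with h | h
    · rw [h, zero_smul]
      exact Submodule.zero_mem _
    · exact Submodule.smul_mem _ _ (Submodule.subset_span ⟨i, h, rfl⟩)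
  · intro h
    clear hl
    induction h using Submodule.span_induction with
    | mem f hf =>
      obtain ⟨i, hi, rfl⟩ := hf
      exact hi
    | zero => simp
    | add f g _ _ hf hg => simp_all
    | smul c f _ hf => simp_all
end

section
/- For integers p, q and n ≥ 1, let T_n(p,q) be the n×n integer matrix with entries: T(1,1) = p+q; T(i,1) = q for 2 ≤ i ≤ n; T(i,i) = p for 2 ≤ i ≤ n; T(i,i+1) = −q for 1 ≤ i ≤ n−1; and all other entries 0. Then det T_n(p,q) = p^n + p^{n−1}q + … + p q^{n−1} + q^n = Σ_{i=0}^{n} p^{n−i} q^i. -/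
/-- The `n × n` integer matrix `T_n(p,q)` (indexed by `Fin n`, so the "first" row/column is
index `0`): `T 0 0 = p + q`; `T i 0 = q` for `i ≥ 1`; `T i i = p` for `i ≥ 1`;
`T i (i+1) = −q`; all other entries `0`. -/
def cupMatrix (n : ℕ) (p q : ℤ) : Matrix (Fin n) (Fin n) ℤ :=
  Matrix.of fun i j =>
    if (i : ℕ) = 0 ∧ (j : ℕ) = 0 then p + q
    else if (j : ℕ) = 0 then q
    else if i = j then p
    else if (j : ℕ) = (i : ℕ) + 1 then -q
    else 0

theorem cup_minor_last (n : ℕ) (p q : ℤ) :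
    (cupMatrix (n + 1) p q).submatrix (Fin.last n).succAbove (Fin.last n).succAbove
      = cupMatrix n p q := by
  ext i j
  simp [-Fin.val_eq_zero_iff, cupMatrix, Fin.succAbove_last]

theorem cup_minor_zero (n : ℕ) (p q : ℤ) :
    ((cupMatrix (n + 1) p q).submatrix (Fin.last n).succAbove (0 : Fin (n + 1)).succAbove).det
      = (-q) ^ n := by
  rw [Matrix.det_of_isLowerTriangular]
  · simp [-Fin.val_eq_zero_iff, cupMatrix, Fin.succAbove_last, Fin.ext_iff]
  · intro i j hij
    have h : (i : ℕ) < j := hij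
    have h1 : ¬ ((i : ℕ) = j + 1) := by omega
    have h2 : ¬ ((j : ℕ) = i) := by omega
    simp [-Fin.val_eq_zero_iff, cupMatrix, Fin.succAbove_last, Fin.ext_iff, h1, h2]

theorem cup_rec (m : ℕ) (p q : ℤ) :
    (cupMatrix (m + 2) p q).det = p * (cupMatrix (m + 1) p q).det + q ^ (m + 2) := by
  rw [Matrix.det_succ_row _ (Fin.last (m + 1)), Fin.sum_univ_succ, Fin.sum_univ_castSucc,
    Finset.sum_eq_zero, cup_minor_zero, Fin.succ_last, cup_minor_last]
  · have e0 : cupMatrix (m + 2) p q (Fin.last (m + 1)) 0 = q := by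
      simp [cupMatrix]
    have e1 : cupMatrix (m + 2) p q (Fin.last (m + 1)) (Fin.last (m + 1)) = p := by
      simp [cupMatrix]
    rw [e0, e1, neg_pow q]
    have h : ((-1 : ℤ) ^ (m + 1)) * (-1) ^ (m + 1) = 1 := by
      rw [← mul_pow]; simp
    simp only [Fin.val_last, Fin.val_zero, add_zero, pow_add (-1 : ℤ) (m + 1) (m + 1), h]
    linear_combination (q ^ (m + 2)) * h
  · intro i _
    have h1 : ¬ (m = (i : ℕ)) := by omega
    have h2 : ¬ ((i : ℕ) = m + 1) := by omega
    simp [-Fin.val_eq_zero_iff, cupMatrix, Fin.ext_iff, h1, h2]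

/-- For integers `p, q` and `n ≥ 1`,
`det T_n(p,q) = p^n + p^{n−1}q + … + p q^{n−1} + q^n = ∑_{i=0}^{n} p^{n−i} q^i`. -/
theorem statement14 (n : ℕ) (hn : 1 ≤ n) (p q : ℤ) :
    (cupMatrix n p q).det = ∑ i ∈ Finset.range (n + 1), p ^ (n - i) * q ^ i := by
  obtain ⟨m, rfl⟩ : ∃ m, n = m + 1 := ⟨n - 1, by omega⟩
  clear hn
  induction m with
  | zero => simp [-Fin.val_eq_zero_iff, cupMatrix, Finset.sum_range_succ]
  | succ m ih =>
    rw [cup_rec, ih, Finset.sum_range_succ _ (m + 1 + 1), Finset.mul_sum]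
    congr 1
    · apply Finset.sum_congr rfl
      intro i hi
      have hi' := Finset.mem_range.mp hi
      rw [show m + 1 + 1 - i = (m + 1 - i) + 1 by omega]
      ring
    · simp
end
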